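/- For every Cayley tree T labelled with [n]_0, the waiting time of T equals the number of probes of its preference sequence, and the number of priority small ascents of T equals the number of lucky cars of its preference sequence: wait(T) = probes(π_T) and psa(T) = lucky(π_T). -/

import Mathlib

/-!
Write `ω` for the weary permutation. Car `c` of the preference sequence parks exactly at spot
`ω⁻¹ c`. Indeed its preferred spot `ω⁻¹ (f c) + 1` is at most `ω⁻¹ c`, because a vertex is visited
after its parent; and at every time from `ω⁻¹ (f c) + 1` to `ω⁻¹ c - 1` the vertex `c` was available
but passed over, so the search visited a smaller vertex instead, whose car has already taken the
corresponding spot.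

Reindexing by `c = ω i` turns `i - f_{pt(T)}(i)` into `ω⁻¹ c - ω⁻¹ (f c)`, which is one more than
the displacement of car `c`. Summing gives the first identity, and counting the cars of
displacement zero gives the second.
-/

open scoped Classical

namespace WearyParking

/-- `f` is the parent function of a Cayley tree on `{0,…,n}` rooted at `0`:
`f 0 = 0`, `f` is pinned to `0` outside `{1,…,n}`, `f` maps `{1,…,n}` into `{0,…,n}`,
and every vertex reaches the root under iteration. -/
def IsCayleyTree (n : ℕ) (f : ℕ → ℕ) : Prop :=
  f 0 = 0 ∧ (∀ i, n < i → f i = 0) ∧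
  (∀ i, 1 ≤ i → i ≤ n → f i ≤ n) ∧
  (∀ i, 1 ≤ i → i ≤ n → ∃ k, f^[k] i = 0)

/-- A non-root vertex `i` is a record of the tree if it is greater than
all of its ancestors. -/
def IsRecord (n : ℕ) (f : ℕ → ℕ) (i : ℕ) : Prop :=
  1 ≤ i ∧ i ≤ n ∧ ∀ k, 1 ≤ k → f^[k] i < i

/-- The smallest record larger than `i`. -/
noncomputable def nextRecord (n : ℕ) (f : ℕ → ℕ) (i : ℕ) : ℕ :=
  sInf {j | IsRecord n f j ∧ i < j}

/-- The record (blob) code of the tree, a function on `{1,…,n-1}`: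
at a non-record position it records the parent, and at a record position it
records the parent of the next record. -/
noncomputable def blob (n : ℕ) (f : ℕ → ℕ) (i : ℕ) : ℕ :=
  if IsRecord n f i then f (nextRecord n f i) else f i

/-- Number of children of vertex `v` in the tree. -/
def numChildren (n : ℕ) (f : ℕ → ℕ) (v : ℕ) : ℕ :=
  ((Finset.Icc 1 n).filter fun i => f i = v).card

/-- The list of the first `i+1` vertices visited by the priority-first search:
start at the root `0`; at each step visit the smallest unvisited vertex whose
parent has been visited. -/
noncomputable def wearyList (n : ℕ) (f : ℕ → ℕ) : ℕ → List ℕ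
  | 0 => [0]
  | (i + 1) =>
      wearyList n f i ++
        [sInf {v | 1 ≤ v ∧ v ≤ n ∧ v ∉ wearyList n f i ∧ f v ∈ wearyList n f i}]

/-- The weary permutation of the tree: `weary n f i` is the `i`-th vertex visited
by the priority-first search (with `weary n f 0 = 0`). -/
noncomputable def weary (n : ℕ) (f : ℕ → ℕ) (i : ℕ) : ℕ :=
  (wearyList n f n).getD i 0

/-- The inverse of the weary permutation. -/
noncomputable def wearyInv (n : ℕ) (f : ℕ → ℕ) (v : ℕ) : ℕ :=
  sInf {i | weary n f i = v}

/-- The preference sequence `π_T` of the tree: `π_T i = ω_T⁻¹ (f_T i) + 1`. -/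
noncomputable def pref (n : ℕ) (f : ℕ → ℕ) (i : ℕ) : ℕ :=
  wearyInv n f (f i) + 1

/-- Parent function of the priority tree `pt(T)`: `ω_T⁻¹ ∘ f_T ∘ ω_T`. -/
noncomputable def prioParent (n : ℕ) (f : ℕ → ℕ) (i : ℕ) : ℕ :=
  wearyInv n f (f (weary n f i))

/-- The list of spots occupied by cars `1,…,c` in the classical parking process:
car `c` parks at the first spot `≥ π c` not occupied by an earlier car. -/
noncomputable def spotList (π : ℕ → ℕ) : ℕ → List ℕ
  | 0 => []
  | (c + 1) => spotList π c ++ [sInf {s | π (c + 1) ≤ s ∧ s ∉ spotList π c}]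

/-- The spot where car `c` ends up in the classical parking process. -/
noncomputable def spot (π : ℕ → ℕ) (c : ℕ) : ℕ :=
  (spotList π c).getD (c - 1) 0

/-- `π` is a parking function of length `n`: preferences lie in `{1,…,n}`
(pinned to `1` outside `{1,…,n}`) and every car parks within the `n` spots. -/
def IsParkingFun (n : ℕ) (π : ℕ → ℕ) : Prop :=
  (∀ c, 1 ≤ c → c ≤ n → 1 ≤ π c ∧ π c ≤ n) ∧
  (∀ c, c = 0 ∨ n < c → π c = 1) ∧
  (∀ c, 1 ≤ c → c ≤ n → spot π c ≤ n)

/-- The bird's-eye permutation `ω_π`: the car parked at spot `i` (and `0` at `0`). -/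
noncomputable def birdsEye (n : ℕ) (π : ℕ → ℕ) (i : ℕ) : ℕ :=
  if i = 0 then 0 else sInf {c | 1 ≤ c ∧ c ≤ n ∧ spot π c = i}

/-- The inverse of the bird's-eye permutation. -/
noncomputable def birdsEyeInv (n : ℕ) (π : ℕ → ℕ) (c : ℕ) : ℕ :=
  sInf {i | birdsEye n π i = c}

/-- Parent function of the parking tree `PT(π)`: `f_π i = ω_π (π i - 1)`. -/
noncomputable def ptParent (n : ℕ) (π : ℕ → ℕ) (i : ℕ) : ℕ :=
  if 1 ≤ i ∧ i ≤ n then birdsEye n π (π i - 1) else 0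

/-- `v` is a record of the parking function `π`, i.e. a left-to-right maximum of
the word `ω_π(1) ω_π(2) ⋯ ω_π(n)`. -/
def IsPfRecord (n : ℕ) (π : ℕ → ℕ) (v : ℕ) : Prop :=
  ∃ i, 1 ≤ i ∧ i ≤ n ∧ birdsEye n π i = v ∧ ∀ j, 1 ≤ j → j < i → birdsEye n π j < v

/-- The waiting time of the tree: `wait T = Σ_{i=1}^n (i - f_{pt(T)}(i))`. -/
noncomputable def wait (n : ℕ) (f : ℕ → ℕ) : ℕ :=
  ∑ i ∈ Finset.Icc 1 n, (i - prioParent n f i)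

/-- The number of priority small ascents of the tree. -/
noncomputable def psa (n : ℕ) (f : ℕ → ℕ) : ℕ :=
  ((Finset.Icc 1 n).filter fun i => prioParent n f i = i - 1).card

/-- The number of children of the root. -/
def degRoot (n : ℕ) (f : ℕ → ℕ) : ℕ := numChildren n f 0

/-- The children sequence: `chseq n f j` is the number of vertices with exactly
`j` children. -/
def chseq (n : ℕ) (f : ℕ → ℕ) (j : ℕ) : ℕ :=
  ((Finset.Icc 0 n).filter fun v => numChildren n f v = j).card

/-- The number of probes of the parking function: `n` plus the total displacement. -/
noncomputable def probes (n : ℕ) (π : ℕ → ℕ) : ℕ :=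
  n + ∑ c ∈ Finset.Icc 1 n, (spot π c - π c)

/-- The number of lucky cars of `π`: cars parking at their preferred spot. -/
noncomputable def lucky (n : ℕ) (π : ℕ → ℕ) : ℕ :=
  ((Finset.Icc 1 n).filter fun c => spot π c = π c).card

/-- The number of `1`s in `π`. -/
def ones (n : ℕ) (π : ℕ → ℕ) : ℕ :=
  ((Finset.Icc 1 n).filter fun c => π c = 1).card

/-- The multiplicity of the value `v` in the parking function `π`. -/
def multIn (n : ℕ) (π : ℕ → ℕ) (v : ℕ) : ℕ :=
  ((Finset.Icc 1 n).filter fun c => π c = v).card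

/-- The multiplicity sequence: `multSeq n π j` is the number of values in
`{1,…,n+1}` appearing exactly `j` times in `π`. -/
def multSeq (n : ℕ) (π : ℕ → ℕ) (j : ℕ) : ℕ :=
  ((Finset.Icc 1 (n + 1)).filter fun v => multIn n π v = j).card

/-- The tree is a path graph with endpoints `0` and `n`: every vertex has at most
one child and `n` is the (unique) leaf. -/
def IsPathTree (n : ℕ) (f : ℕ → ℕ) : Prop :=
  (∀ v, v ≤ n → numChildren n f v ≤ 1) ∧ numChildren n f n = 0

/-- `g` is the parent map of a rooted forest on `{1,…,n}` rooted at `{1,…,k}`: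
the vertices `1,…,k` are roots (fixed points), every other vertex of `{1,…,n}` has a
parent in `{1,…,n}`, every vertex reaches one of the roots under iteration, and `g`
is pinned to `0` outside `{1,…,n}`. -/
def IsForestRootedAt (n k : ℕ) (g : ℕ → ℕ) : Prop :=
  (∀ i, 1 ≤ i → i ≤ k → g i = i) ∧
  (∀ i, k < i → i ≤ n → 1 ≤ g i ∧ g i ≤ n) ∧
  (∀ i, 1 ≤ i → i ≤ n → ∃ m, 1 ≤ g^[m] i ∧ g^[m] i ≤ k) ∧
  (∀ i, i = 0 ∨ n < i → g i = 0)

lemma eq_append_map_range_of_succ {α : Type*} {L : ℕ → List α} {x : ℕ → α}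
    (hL : ∀ i, L (i + 1) = L i ++ [x i]) (i : ℕ) : L i = L 0 ++ (List.range i).map x := by
  induction i with
  | zero => rw [List.range_zero, List.map_nil, List.append_nil]
  | succ i ih =>
    rw [hL, ih, List.range_succ, List.map_append, List.map_singleton, List.append_assoc]

section Parking

variable (π : ℕ → ℕ)

lemma spotList_eq_map_range (c : ℕ) :
    spotList π c =
      (List.range c).map fun d ↦ sInf {s | π (d + 1) ≤ s ∧ s ∉ spotList π d} :=
  eq_append_map_range_of_succ (fun _ ↦ rfl) c

lemma spot_succ (c : ℕ) :
    spot π (c + 1) = sInf {s | π (c + 1) ≤ s ∧ s ∉ spotList π c} := by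
  rw [spot, spotList_eq_map_range]
  simp

variable {π}

lemma mem_spotList {c s : ℕ} : s ∈ spotList π c ↔ s ∈ spot π '' Set.Icc 1 c := by
  rw [spotList_eq_map_range]
  simp only [← spot_succ, List.mem_map, List.mem_range, Set.mem_image, Set.mem_Icc]
  constructor
  · rintro ⟨d, hd, rfl⟩
    exact ⟨d + 1, ⟨d.succ_pos, hd⟩, rfl⟩
  · rintro ⟨d, hd, rfl⟩
    exact ⟨d - 1, by omega, by rw [Nat.sub_add_cancel hd.1]⟩

lemma spot_eq_sInf {c : ℕ} (hc : 1 ≤ c) :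
    spot π c = sInf {s | π c ≤ s ∧ s ∉ spot π '' Set.Ico 1 c} := by
  obtain ⟨d, rfl⟩ := Nat.exists_eq_add_of_le' hc
  simp only [spot_succ, mem_spotList, Set.Ico_add_one_right_eq_Icc]

lemma spot_eqOn_of_Ico_subset_image {n : ℕ} {p : ℕ → ℕ} (hinj : Set.InjOn p (Set.Icc 1 n))
    (hle : ∀ c ∈ Set.Icc 1 n, π c ≤ p c)
    (hocc : ∀ c ∈ Set.Icc 1 n, Set.Ico (π c) (p c) ⊆ p '' Set.Ico 1 c) :
    Set.EqOn (spot π) p (Set.Icc 1 n) := by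
  intro c hc
  induction c using Nat.strong_induction_on with
  | _ c ih =>
  have hcars : Set.Ico 1 c ⊆ Set.Icc 1 n := fun d hd ↦ ⟨hd.1, hd.2.le.trans hc.2⟩
  have hspot : Set.EqOn (spot π) p (Set.Ico 1 c) := fun d hd ↦ ih d hd.2 (hcars hd)
  rw [spot_eq_sInf hc.1, hspot.image_eq]
  refine IsLeast.csInf_eq ⟨⟨hle c hc, ?_⟩, fun s hs ↦ ?_⟩
  · rw [hinj.mem_image_iff hcars hc]
    exact fun hcc ↦ hcc.2.false
  · by_contra! hlt
    exact hs.2 (hocc c hc ⟨hs.1, hlt⟩)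

end Parking

section Search

variable (n : ℕ) (f : ℕ → ℕ)

/-- The vertices available to the priority-first search once it has made `i` steps: the unvisited
vertices whose parent has been visited. -/
def available (i : ℕ) : Set ℕ :=
  {v | 1 ≤ v ∧ v ≤ n ∧ v ∉ wearyList n f i ∧ f v ∈ wearyList n f i}

lemma wearyList_succ (i : ℕ) :
    wearyList n f (i + 1) = wearyList n f i ++ [sInf (available n f i)] := rfl

lemma wearyList_eq_cons (i : ℕ) :
    wearyList n f i = 0 :: (List.range i).map fun j ↦ sInf (available n f j) :=
  eq_append_map_range_of_succ (wearyList_succ n f) i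

lemma weary_zero : weary n f 0 = 0 := by
  rw [weary, wearyList_eq_cons, List.getD_cons_zero]

variable {n f}

lemma weary_succ {i : ℕ} (hi : i < n) : weary n f (i + 1) = sInf (available n f i) := by
  simp [weary, wearyList_eq_cons n f n, hi]

lemma wearyList_eq_map_weary {i : ℕ} (hi : i ≤ n) :
    wearyList n f i = (List.range (i + 1)).map (weary n f) := by
  rw [wearyList_eq_cons, List.range_succ_eq_map, List.map_cons, List.map_map, weary_zero]
  congr 1
  refine List.map_congr_left fun j hj ↦ (weary_succ ?_).symm
  exact (List.mem_range.1 hj).trans_le hi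

lemma mem_wearyList {i v : ℕ} (hi : i ≤ n) :
    v ∈ wearyList n f i ↔ v ∈ weary n f '' Set.Iic i := by
  simp only [wearyList_eq_map_weary hi, List.mem_map, List.mem_range, Nat.lt_succ_iff,
    Set.mem_image, Set.mem_Iic]

lemma IsCayleyTree.mapsTo (hf : IsCayleyTree n f) : Set.MapsTo f (Set.Iic n) (Set.Iic n) := by
  rintro (_ | v) hv
  · simp [hf.1]
  · exact hf.2.2.1 _ v.succ_pos hv

lemma IsCayleyTree.exists_iterate_eq_zero (hf : IsCayleyTree n f) {v : ℕ} (hv : v ≤ n) :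
    ∃ k, f^[k] v = 0 := by
  rcases v.eq_zero_or_pos with rfl | hpos
  · exact ⟨0, rfl⟩
  · exact hf.2.2.2 v hpos hv

lemma exists_le_notMem_wearyList {i : ℕ} (hi : i < n) : ∃ v ≤ n, v ∉ wearyList n f i := by
  have hcard : (wearyList n f i).toFinset.card < (Finset.Iic n).card := by
    refine (List.toFinset_card_le _).trans_lt ?_
    simpa [wearyList_eq_cons] using hi
  simpa using Finset.exists_mem_notMem_of_card_lt_card hcard

-- The path from an unvisited vertex to the root enters the visited set at some point, and the last
-- vertex before that is available.
lemma available_nonempty (hf : IsCayleyTree n f) {i : ℕ} (hi : i < n) :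
    (available n f i).Nonempty := by
  have hroot : 0 ∈ wearyList n f i := (mem_wearyList hi.le).2 ⟨0, i.zero_le, weary_zero n f⟩
  obtain ⟨v, hvn, hv⟩ := exists_le_notMem_wearyList (f := f) hi
  obtain ⟨k, hk⟩ := hf.exists_iterate_eq_zero hvn
  obtain ⟨m, hm, hm'⟩ := Nat.exists_not_and_succ_of_not_zero_of_exists
    (p := fun m ↦ f^[m] v ∈ wearyList n f i) hv ⟨k, hk ▸ hroot⟩
  have hne : f^[m] v ≠ 0 := fun h ↦ hm (h ▸ hroot)
  rw [Function.iterate_succ_apply'] at hm'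
  exact ⟨f^[m] v, Nat.one_le_iff_ne_zero.2 hne, hf.mapsTo.iterate m hvn, hm, hm'⟩

lemma isLeast_available_weary (hf : IsCayleyTree n f) {i : ℕ} (hi : i < n) :
    IsLeast (available n f i) (weary n f (i + 1)) := by
  rw [weary_succ hi]
  exact ⟨Nat.sInf_mem (available_nonempty hf hi), fun _ ↦ Nat.sInf_le⟩

lemma weary_mem_Icc (hf : IsCayleyTree n f) {i : ℕ} (hi : i ∈ Set.Icc 1 n) :
    weary n f i ∈ Set.Icc 1 n := by
  obtain ⟨j, rfl⟩ := Nat.exists_eq_add_of_le' hi.1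
  obtain ⟨hpos, hle, -⟩ := (isLeast_available_weary hf hi.2).1
  exact ⟨hpos, hle⟩

lemma nodup_wearyList (hf : IsCayleyTree n f) {i : ℕ} (hi : i ≤ n) : (wearyList n f i).Nodup := by
  induction i with
  | zero => exact List.nodup_singleton 0
  | succ i ih =>
    obtain ⟨-, -, hnew, -⟩ := (isLeast_available_weary hf hi).1
    rw [weary_succ hi] at hnew
    rw [wearyList_succ, ← List.concat_eq_append]
    exact (ih (by omega)).concat hnew

lemma weary_injOn (hf : IsCayleyTree n f) : Set.InjOn (weary n f) (Set.Iic n) := by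
  have hnodup := nodup_wearyList hf le_rfl
  rw [wearyList_eq_map_weary le_rfl] at hnodup
  intro i hi j hj
  exact List.inj_on_of_nodup_map hnodup (List.mem_range.2 (Nat.lt_succ_of_le hi))
    (List.mem_range.2 (Nat.lt_succ_of_le hj))

lemma weary_surjOn (hf : IsCayleyTree n f) :
    Set.SurjOn (weary n f) (Set.Iic n) (Set.Iic n) := by
  have hmaps : Set.MapsTo (weary n f) (Set.Iic n) (Set.Iic n) := by
    rintro (_ | i) hi
    · simp [weary_zero]
    · exact (weary_mem_Icc hf ⟨i.succ_pos, hi⟩).2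
  rw [← Finset.coe_Iic] at hmaps ⊢
  refine Finset.surjOn_of_injOn_of_card_le _ hmaps ?_ le_rfl
  simpa only [Finset.coe_Iic] using weary_injOn hf

lemma weary_wearyInv (hf : IsCayleyTree n f) {v : ℕ} (hv : v ≤ n) :
    weary n f (wearyInv n f v) = v := by
  obtain ⟨i, -, hi⟩ := weary_surjOn hf hv
  exact Nat.sInf_mem (s := {i | weary n f i = v}) ⟨i, hi⟩

lemma wearyInv_le (hf : IsCayleyTree n f) {v : ℕ} (hv : v ≤ n) : wearyInv n f v ≤ n := by
  obtain ⟨i, hin, hi⟩ := weary_surjOn hf hv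
  exact (Nat.sInf_le (s := {i | weary n f i = v}) hi).trans hin

lemma wearyInv_weary (hf : IsCayleyTree n f) {i : ℕ} (hi : i ≤ n) :
    wearyInv n f (weary n f i) = i := by
  have hle : wearyInv n f (weary n f i) ≤ i := Nat.sInf_le (s := {j | weary n f j = _}) rfl
  have hmem : weary n f (wearyInv n f (weary n f i)) = weary n f i :=
    Nat.sInf_mem (s := {j | weary n f j = _}) ⟨i, rfl⟩
  exact weary_injOn hf (hle.trans hi) hi hmem

lemma wearyInv_mem_Icc (hf : IsCayleyTree n f) {v : ℕ} (hv : v ∈ Set.Icc 1 n) :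
    wearyInv n f v ∈ Set.Icc 1 n := by
  refine ⟨Nat.one_le_iff_ne_zero.2 fun h ↦ ?_, wearyInv_le hf hv.2⟩
  have hv0 : weary n f (wearyInv n f v) = 0 := h ▸ weary_zero n f
  rw [weary_wearyInv hf hv.2] at hv0
  exact Nat.one_le_iff_ne_zero.1 hv.1 hv0

lemma wearyInv_injOn (hf : IsCayleyTree n f) : Set.InjOn (wearyInv n f) (Set.Iic n) :=
  Set.LeftInvOn.injOn (f₁' := weary n f) fun _ ↦ weary_wearyInv hf

lemma mem_wearyList_iff_wearyInv_le (hf : IsCayleyTree n f) {i v : ℕ} (hi : i ≤ n) (hv : v ≤ n) :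
    v ∈ wearyList n f i ↔ wearyInv n f v ≤ i := by
  rw [mem_wearyList hi]
  constructor
  · rintro ⟨j, hj, rfl⟩
    rwa [wearyInv_weary hf (hj.trans hi)]
  · exact fun h ↦ ⟨_, h, weary_wearyInv hf hv⟩

lemma mem_available_iff (hf : IsCayleyTree n f) {i v : ℕ} (hi : i ≤ n) (hv : v ∈ Set.Icc 1 n) :
    v ∈ available n f i ↔ i ∈ Set.Ico (wearyInv n f (f v)) (wearyInv n f v) := by
  simp only [available, Set.mem_ofPred_eq, hv.1, hv.2, true_and, Set.mem_Ico, and_comm,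
    mem_wearyList_iff_wearyInv_le hf hi hv.2,
    mem_wearyList_iff_wearyInv_le hf hi (hf.mapsTo hv.2), not_le]

lemma wearyInv_parent_lt (hf : IsCayleyTree n f) {v : ℕ} (hv : v ∈ Set.Icc 1 n) :
    wearyInv n f (f v) < wearyInv n f v := by
  obtain ⟨hpos, hle⟩ := wearyInv_mem_Icc hf hv
  obtain ⟨i, hi⟩ := Nat.exists_eq_add_of_le' hpos
  have hin : i < n := by omega
  have hv' : v ∈ available n f i := by
    simpa only [← hi, weary_wearyInv hf hv.2] using (isLeast_available_weary hf hin).1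
  rw [mem_available_iff hf hin.le hv] at hv'
  exact hv'.1.trans_lt hv'.2

lemma weary_lt_of_mem_Ioo (hf : IsCayleyTree n f) {v s : ℕ} (hv : v ∈ Set.Icc 1 n)
    (hs : s ∈ Set.Ioo (wearyInv n f (f v)) (wearyInv n f v)) : weary n f s < v := by
  have hsn : s ≤ n := hs.2.le.trans (wearyInv_le hf hv.2)
  obtain ⟨i, rfl⟩ := Nat.exists_eq_add_of_le' (Nat.one_le_of_lt hs.1)
  have hv' : v ∈ available n f i :=
    (mem_available_iff hf (by omega) hv).2 ⟨Nat.lt_succ_iff.1 hs.1, i.lt_succ_self.trans hs.2⟩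
  refine ((isLeast_available_weary hf hsn).2 hv').lt_of_ne ?_
  rintro rfl
  exact hs.2.ne (wearyInv_weary hf hsn).symm

lemma sum_comp_wearyInv {M : Type*} [AddCommMonoid M] (hf : IsCayleyTree n f) (g : ℕ → M) :
    ∑ v ∈ Finset.Icc 1 n, g (wearyInv n f v) = ∑ i ∈ Finset.Icc 1 n, g i := by
  refine Finset.sum_nbij' (wearyInv n f) (weary n f) ?_ ?_ ?_ ?_ fun _ _ ↦ rfl <;>
    simp only [← Finset.mem_coe, Finset.coe_Icc]
  · exact fun _ ↦ wearyInv_mem_Icc hf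
  · exact fun _ ↦ weary_mem_Icc hf
  · exact fun _ hv ↦ weary_wearyInv hf hv.2
  · exact fun _ hi ↦ wearyInv_weary hf hi.2

lemma prioParent_wearyInv (hf : IsCayleyTree n f) {v : ℕ} (hv : v ≤ n) :
    prioParent n f (wearyInv n f v) = wearyInv n f (f v) := by
  rw [prioParent, weary_wearyInv hf hv]

lemma wait_eq_sum_wearyInv (hf : IsCayleyTree n f) :
    wait n f = ∑ v ∈ Finset.Icc 1 n, (wearyInv n f v - wearyInv n f (f v)) := by
  rw [wait, ← sum_comp_wearyInv hf]
  refine Finset.sum_congr rfl fun v hv ↦ ?_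
  rw [prioParent_wearyInv hf (Finset.mem_Icc.1 hv).2]

lemma psa_eq_card_wearyInv (hf : IsCayleyTree n f) :
    psa n f =
      ((Finset.Icc 1 n).filter fun v ↦ wearyInv n f (f v) = wearyInv n f v - 1).card := by
  rw [psa, Finset.card_filter, Finset.card_filter, ← sum_comp_wearyInv hf]
  refine Finset.sum_congr rfl fun v hv ↦ ?_
  rw [prioParent_wearyInv hf (Finset.mem_Icc.1 hv).2]

end Search

lemma spot_pref_eqOn_wearyInv {n : ℕ} {f : ℕ → ℕ} (hf : IsCayleyTree n f) :
    Set.EqOn (spot (pref n f)) (wearyInv n f) (Set.Icc 1 n) := by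
  refine spot_eqOn_of_Ico_subset_image ((wearyInv_injOn hf).mono fun _ hc ↦ hc.2)
    (fun c hc ↦ wearyInv_parent_lt hf hc) fun c hc s hs ↦ ?_
  have hsn : s ≤ n := hs.2.le.trans (wearyInv_le hf hc.2)
  have hpos : 1 ≤ s := (Nat.le_add_left 1 _).trans hs.1
  exact ⟨weary n f s, ⟨(weary_mem_Icc hf ⟨hpos, hsn⟩).1, weary_lt_of_mem_Ioo hf hc hs⟩,
    wearyInv_weary hf hsn⟩

/-- For every Cayley tree `T`: `wait(T) = probes(π_T)` and
`psa(T) = lucky(π_T)`. -/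
theorem stmt15 (n : ℕ) (f : ℕ → ℕ) (hf : IsCayleyTree n f) :
    wait n f = probes n (pref n f) ∧ psa n f = lucky n (pref n f) := by
  have hspot {c : ℕ} (hc : c ∈ Finset.Icc 1 n) : spot (pref n f) c = wearyInv n f c :=
    spot_pref_eqOn_wearyInv hf (Finset.mem_Icc.1 hc)
  have hlt {c : ℕ} (hc : c ∈ Finset.Icc 1 n) : wearyInv n f (f c) < wearyInv n f c :=
    wearyInv_parent_lt hf (Finset.mem_Icc.1 hc)
  constructor
  · calc wait n f
        = ∑ c ∈ Finset.Icc 1 n, (wearyInv n f c - wearyInv n f (f c)) := wait_eq_sum_wearyInv hf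
      _ = ∑ c ∈ Finset.Icc 1 n, (1 + (spot (pref n f) c - pref n f c)) := by
        refine Finset.sum_congr rfl fun c hc ↦ ?_
        have := hlt hc
        rw [hspot hc, pref]
        omega
      _ = probes n (pref n f) := by simp [probes, Finset.sum_add_distrib]
  · rw [psa_eq_card_wearyInv hf, lucky]
    refine congrArg Finset.card (Finset.filter_congr fun c hc ↦ ?_)
    have := hlt hc
    rw [hspot hc, pref]
    omega

end WearyParking
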